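/- arXiv:math/0702066 — 2 statements merged into one kernel-verified Lean document; each statement's English description precedes it below -/
import Mathlib

section
/- For every integer d ≥ 1 there is a constant C(d) such that the following holds. Let P(x) = Σ_{i=0}^d c_i x^i be a real polynomial of degree at most d in one variable with max_{1 ≤ i ≤ d} |c_i| ≥ 1. Then for every δ > 0, the Lebesgue measure of the set {x ∈ [−1,1] : |P(x)| ≤ δ} is at most C(d)·δ^{1/d}. -/
/-! If a sublevel set `E = {|P| ≤ δ}` in `[-1, 1]` has measure greater than `2rd`, then `d`
intervals of radius `r` cannot cover it, so a maximal `r`-separated subset of `E` has at least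
`d + 1` points. Lagrange interpolation at `d + 1` of them writes each coefficient of `P` as a
combination of values of size at most `δ`, with weights of size at most `(2/r)^d`. For `r` a large
multiple of `δ^{1/d}` this makes all the coefficients smaller than `1`. -/

open MeasureTheory Metric Polynomial
open scoped ENNReal Finset NNReal

section Packing

variable {X : Type*} [PseudoEMetricSpace X] {ε : ℝ≥0} {A : Set X} {n : ℕ}

theorem exists_finset_isSeparated_of_lt_packingNumber (h : n < packingNumber ε A) :
    ∃ s : Finset X, #s = n + 1 ∧ ↑s ⊆ A ∧ IsSeparated ε (s : Set X) := by
  simp only [packingNumber, lt_iSup_iff] at h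
  obtain ⟨C, hCA, hsep, hn⟩ := h
  obtain ⟨t, htC, ht⟩ := Set.exists_subset_encard_eq (Order.add_one_le_of_lt hn)
  have htfin : t.Finite := Set.finite_of_encard_eq_coe (k := n + 1) (by exact_mod_cast ht)
  lift t to Finset X using htfin
  rw [Set.encard_coe_eq_coe_finsetCard] at ht
  exact ⟨t, by exact_mod_cast ht, htC.trans hCA, hsep.subset htC⟩

variable [MeasurableSpace X] {μ : Measure X} {m : ℝ≥0∞}

theorem measure_le_card_mul_of_isCover {s : Finset X} (hs : IsCover ε A s)
    (hm : ∀ x ∈ s, μ (closedEBall x ε) ≤ m) : μ A ≤ #s * m :=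
  calc μ A ≤ μ (⋃ x ∈ s, closedEBall x ε) :=
        measure_mono (isCover_iff_subset_iUnion_closedEBall.1 hs)
    _ ≤ ∑ x ∈ s, μ (closedEBall x ε) := measure_biUnion_finset_le _ _
    _ ≤ #s * m := by simpa only [nsmul_eq_mul] using Finset.sum_le_card_nsmul _ _ _ hm

theorem lt_packingNumber_of_mul_lt_measure (hm : ∀ x ∈ A, μ (closedEBall x ε) ≤ m)
    (h : n * m < μ A) : n < packingNumber ε A := by
  by_contra! hle
  have htop : packingNumber ε A ≠ ⊤ := ne_top_of_le_ne_top (ENat.natCast_ne_top n) hle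
  obtain ⟨s, hs⟩ : ∃ s : Finset X, ↑s = maximalSeparatedSet ε A :=
    (Set.finite_of_encard_le_coe ((encard_maximalSeparatedSet htop).trans_le hle)).exists_finset_coe
  have hcard : #s ≤ n := by
    rw [← encard_maximalSeparatedSet htop, ← hs, Set.encard_coe_eq_coe_finsetCard] at hle
    exact_mod_cast hle
  have hsA : ↑s ⊆ A := hs ▸ maximalSeparatedSet_subset
  have hcover : IsCover ε A s := hs ▸ isCover_maximalSeparatedSet htop
  refine h.not_ge ((measure_le_card_mul_of_isCover hcover fun x hx => hm x (hsA hx)).trans ?_)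
  gcongr

end Packing

section Interpolation

variable {𝕜 ι : Type*} [NormedField 𝕜] {s : Finset ι} {v : ι → 𝕜} {r δ : ℝ}

theorem norm_coeff_nodal_le (hv : ∀ i ∈ s, ‖v i‖ ≤ 1) (k : ℕ) :
    ‖(Lagrange.nodal s v).coeff k‖ ≤ 2 ^ #s := by
  have hroots : ∀ z ∈ ((Lagrange.nodal s v).map (RingHom.id 𝕜)).roots, ‖z‖ ≤ 1 := by
    intro z hz
    rw [Polynomial.map_id, mem_roots Lagrange.nodal_ne_zero, IsRoot, Lagrange.eval_nodal,
      Finset.prod_eq_zero_iff] at hz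
    obtain ⟨i, hi, hzi⟩ := hz
    exact sub_eq_zero.1 hzi ▸ hv i hi
  have hsplits : ((Lagrange.nodal s v).map (RingHom.id 𝕜)).Splits := by
    rw [Polynomial.map_id]
    exact Splits.prod fun i _ => Splits.X_sub_C (v i)
  have hchoose := coeff_le_of_roots_le k Lagrange.nodal_monic hsplits hroots
  rw [Polynomial.map_id, Lagrange.natDegree_nodal, one_pow, one_mul] at hchoose
  exact hchoose.trans (by exact_mod_cast Nat.choose_le_two_pow _ _)

theorem norm_nodalWeight_le [DecidableEq ι] (hr : 0 < r) {i : ι} (hi : i ∈ s)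
    (hsep : ∀ j ∈ s, j ≠ i → r ≤ ‖v i - v j‖) :
    ‖Lagrange.nodalWeight s v i‖ ≤ r⁻¹ ^ (#s - 1) := by
  rw [Lagrange.nodalWeight, norm_prod, ← Finset.card_erase_of_mem hi]
  refine (Finset.prod_le_prod (fun _ _ => norm_nonneg _) fun j hj => ?_).trans_eq
    (Finset.prod_const _)
  rw [norm_inv]
  exact inv_anti₀ hr (hsep j (Finset.mem_of_mem_erase hj) (Finset.ne_of_mem_erase hj))

theorem norm_coeff_basis_le [DecidableEq ι] (hr : 0 < r) {i : ι} (hi : i ∈ s)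
    (hv : ∀ j ∈ s, ‖v j‖ ≤ 1) (hsep : ∀ j ∈ s, j ≠ i → r ≤ ‖v i - v j‖) (k : ℕ) :
    ‖(Lagrange.basis s v i).coeff k‖ ≤ (2 / r) ^ (#s - 1) := by
  have hnodal : ‖(Lagrange.nodal (s.erase i) v).coeff k‖ ≤ 2 ^ (#s - 1) := by
    rw [← Finset.card_erase_of_mem hi]
    exact norm_coeff_nodal_le (fun j hj => hv j (Finset.mem_of_mem_erase hj)) k
  rw [Lagrange.basis_eq_prod_sub_inv_mul_nodal_div hi, ← Lagrange.nodal_erase_eq_nodal_div hi,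
    coeff_C_mul, norm_mul, div_eq_inv_mul, mul_pow]
  gcongr
  exact norm_nodalWeight_le hr hi hsep

theorem norm_coeff_le_of_norm_eval_le {P : 𝕜[X]} (hP : P.degree < #s) (hr : 0 < r)
    (hv : ∀ i ∈ s, ‖v i‖ ≤ 1) (hsep : (s : Set ι).Pairwise fun i j => r ≤ ‖v i - v j‖)
    (hδ : ∀ i ∈ s, ‖P.eval (v i)‖ ≤ δ) (k : ℕ) :
    ‖P.coeff k‖ ≤ #s * (δ * (2 / r) ^ (#s - 1)) := by
  classical
  have hinj : Set.InjOn v s := fun i hi j hj hij => by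
    by_contra hne
    simpa [hij] using hr.trans_le (hsep hi hj hne)
  have hterm : ∀ i ∈ s,
      ‖P.eval (v i) * (Lagrange.basis s v i).coeff k‖ ≤ δ * (2 / r) ^ (#s - 1) := by
    intro i hi
    rw [norm_mul]
    exact mul_le_mul (hδ i hi)
      (norm_coeff_basis_le hr hi hv (fun j hj hji => hsep hi hj hji.symm) k)
      (norm_nonneg _) ((norm_nonneg _).trans (hδ i hi))
  calc ‖P.coeff k‖ = ‖∑ i ∈ s, P.eval (v i) * (Lagrange.basis s v i).coeff k‖ := by
        conv_lhs => rw [Lagrange.eq_interpolate hinj hP, Lagrange.interpolate_apply]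
        simp only [finsetSum_coeff, coeff_C_mul]
    _ ≤ ∑ _i ∈ s, δ * (2 / r) ^ (#s - 1) := norm_sum_le_of_le s hterm
    _ = #s * (δ * (2 / r) ^ (#s - 1)) := by rw [Finset.sum_const, nsmul_eq_mul]

end Interpolation

section Sublevel

variable {𝕜 : Type*} [NormedField 𝕜] [NormedAlgebra ℝ 𝕜] {P : 𝕜[X]} {d k : ℕ} {δ : ℝ}

theorem volume_le_of_lt_norm_coeff (hP : P.natDegree ≤ d) {r : ℝ≥0} (hr : 0 < r) {E : Set ℝ}
    (hE : E ⊆ Set.Icc (-1) 1) (hδ : ∀ x ∈ E, ‖P.eval (algebraMap ℝ 𝕜 x)‖ ≤ δ)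
    (hk : (d + 1) * (δ * (2 / r) ^ d) < ‖P.coeff k‖) :
    volume E ≤ d * (2 * r) := by
  by_contra! hlt
  obtain ⟨s, hcard, hsE, hsep⟩ := exists_finset_isSeparated_of_lt_packingNumber
    (lt_packingNumber_of_mul_lt_measure (fun x _ => (Real.volume_closedEBall x r).le) hlt)
  have hdeg : P.degree < #s := by
    rw [hcard]
    exact degree_le_natDegree.trans_lt (by exact_mod_cast Nat.lt_succ_of_le hP)
  have hnodes : ∀ x ∈ s, ‖algebraMap ℝ 𝕜 x‖ ≤ 1 := fun x hx => by
    rw [norm_algebraMap']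
    exact abs_le.2 (hE (hsE hx))
  have hdist : (s : Set ℝ).Pairwise fun x y => r ≤ ‖algebraMap ℝ 𝕜 x - algebraMap ℝ 𝕜 y‖ := by
    intro x hx y hy hxy
    rw [← map_sub, norm_algebraMap', ← dist_eq_norm, dist_edist]
    exact ENNReal.toReal_mono (edist_ne_top x y) (hsep hx hy hxy).le
  have hcoeff := norm_coeff_le_of_norm_eval_le hdeg hr hnodes hdist (fun x hx => hδ x (hsE hx)) k
  rw [hcard, Nat.add_sub_cancel, Nat.cast_succ] at hcoeff
  exact hk.not_ge hcoeff

theorem stmt2_general (hd : 1 ≤ d) (hP : P.natDegree ≤ d) (hk : 1 ≤ ‖P.coeff k‖) (hδ : 0 < δ) :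
    volume {x : ℝ | x ∈ Set.Icc (-1 : ℝ) 1 ∧ ‖P.eval (algebraMap ℝ 𝕜 x)‖ ≤ δ}
      ≤ ENNReal.ofReal (4 * d * (d + 2) * δ ^ ((1 : ℝ) / d)) := by
  set t : ℝ := δ ^ ((1 : ℝ) / d) with ht
  have : 0 < t := Real.rpow_pos_of_pos hδ _
  have ht_pow : t ^ d = δ := by
    rw [ht, one_div]
    exact Real.rpow_inv_natCast_pow hδ.le (by lia)
  obtain ⟨r, hr⟩ : ∃ r : ℝ≥0, (r : ℝ) = 2 * ((d + 2) * t) := ⟨⟨_, by positivity⟩, rfl⟩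
  have hr_pos : 0 < r := by
    rw [← NNReal.coe_pos, hr]
    positivity
  have hsmall : (d + 1) * (δ * (2 / r) ^ d) < 1 := by
    have hpow : (d + 2 : ℝ) ≤ (d + 2) ^ d :=
      le_self_pow₀ (by linarith [d.cast_nonneg (α := ℝ)]) (by lia)
    calc (d + 1) * (δ * (2 / r) ^ d) = (d + 1) / (d + 2 : ℝ) ^ d := by
          rw [hr, ← div_div, div_self two_ne_zero, div_pow, mul_pow, ht_pow, one_pow]
          field_simp
      _ < 1 := by
          rw [div_lt_one (by positivity)]
          linarith
  have hC : 4 * d * (d + 2) * t = ((d * (2 * r) : ℝ≥0) : ℝ) := by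
    push_cast
    rw [hr]
    ring
  rw [hC, ENNReal.ofReal_coe_nnreal]
  push_cast
  exact volume_le_of_lt_norm_coeff hP hr_pos (fun x hx => hx.1) (fun x hx => hx.2)
    (hsmall.trans_le hk)

end Sublevel

/-- For every `d ≥ 1` there is `C(d)` such that: if `P` is a real
polynomial of degree at most `d` in one variable with `max_{1 ≤ i ≤ d} |c_i| ≥ 1`,
then for every `δ > 0` the Lebesgue measure of `{x ∈ [-1,1] : |P(x)| ≤ δ}` is at
most `C(d) δ^{1/d}`. -/
theorem stmt2 (d : ℕ) (hd : 1 ≤ d) :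
    ∃ C : ℝ, ∀ P : Polynomial ℝ, P.natDegree ≤ d →
      (∃ i, 1 ≤ i ∧ i ≤ d ∧ 1 ≤ |P.coeff i|) →
      ∀ δ : ℝ, 0 < δ →
        MeasureTheory.volume {x : ℝ | x ∈ Set.Icc (-1 : ℝ) 1 ∧ |P.eval x| ≤ δ}
          ≤ ENNReal.ofReal (C * δ ^ ((1 : ℝ) / (d : ℝ))) :=
  ⟨4 * d * (d + 2), fun _ hP ⟨_, _, _, hi⟩ _ hδ => stmt2_general hd hP hi hδ⟩
end

section
/- For every integer n ≥ 2 there is a constant C(n) such that for every integer d ≥ 1 and every real polynomial P in n variables of total degree at most d which is not identically zero, the (n−1)-dimensional Hausdorff measure of the set {x ∈ ℝⁿ : |x| ≤ 1 and P(x) = 0} is at most C(n)·d. -/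
open MeasureTheory
open MvPolynomial
open scoped NNReal ENNReal Topology

/-! Differentiating `P` along a chain of decreasing degrees shows that every zero of `P` is a zero
of some nonzero iterated derivative `Q` at which the gradient of `Q` does not vanish. Near such a
point the zeros of `Q` form a graph over the coordinate hyperplane orthogonal to the direction of
the largest partial derivative, and the projection `x ↦ j.removeNth x` is antilipschitz on them
with constant `2 * m + 1` in dimension `m + 1`, whatever the polynomial. By the area inequality,
the `m`-dimensional measure of these zeros is thus at most `(2 * m + 1) ^ m` times the integral of
the number of zeros of `P` on lines parallel to a coordinate axis. The zero set of `P` is Lebesgue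
null, by the same inequality with exponent `m + 1`, so on almost every such line `P` restricts to
a nonzero polynomial in one variable, with at most `deg P` zeros, and the lines that meet the unit
cube form a cube of volume `2 ^ m`. -/

theorem totalDegree_pderiv_lt {σ R : Type*} [CommSemiring R] {P : MvPolynomial σ R}
    (hP : P.totalDegree ≠ 0) (i : σ) : (pderiv i P).totalDegree < P.totalDegree := by
  classical
  refine (Finset.sup_lt_iff (Nat.pos_of_ne_zero hP)).2 fun s hs => ?_
  have hcoeff : coeff (s + Finsupp.single i 1) P ≠ 0 := by
    rw [mem_support_iff, coeff_pderiv] at hs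
    exact left_ne_zero_of_mul hs
  have hle := le_totalDegree (mem_support_iff.2 hcoeff)
  rwa [Finsupp.sum_add_index' (by simp) (by simp), Finsupp.sum_single_index rfl] at hle

theorem exists_pderiv_ne_zero {σ R : Type*} [CommSemiring R] [NoZeroDivisors R] [CharZero R]
    {P : MvPolynomial σ R} (hP : P.totalDegree ≠ 0) : ∃ i, pderiv i P ≠ 0 := by
  classical
  obtain ⟨s, hs, i, hi⟩ : ∃ s ∈ P.support, ∃ i, s i ≠ 0 := by
    by_contra! h
    exact hP ((totalDegree_eq_zero_iff _ P).2 h)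
  have hs_eq : s - Finsupp.single i 1 + Finsupp.single i 1 = s :=
    tsub_add_cancel_of_le (Finsupp.single_le_iff.2 (Nat.one_le_iff_ne_zero.2 hi))
  refine ⟨i, ne_zero_iff.2 ⟨s - Finsupp.single i 1, ?_⟩⟩
  rw [coeff_pderiv, hs_eq]
  exact mul_ne_zero (mem_support_iff.1 hs) (Nat.cast_add_one_ne_zero _)

theorem hasStrictFDerivAt_eval {𝕜 ι : Type*} [NontriviallyNormedField 𝕜] [Fintype ι]
    (P : MvPolynomial ι 𝕜) (x : ι → 𝕜) :
    HasStrictFDerivAt (fun y => eval y P)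
      (∑ j, eval x (pderiv j P) •
        (ContinuousLinearMap.proj j : (ι → 𝕜) →L[𝕜] 𝕜)) x := by
  classical
  induction P using MvPolynomial.induction_on with
  | C a =>
    simp only [eval_C]
    refine (hasStrictFDerivAt_const a x).congr_fderiv ?_
    ext v
    simp
  | add p q hp hq =>
    simp only [map_add]
    refine (hp.fun_add hq).congr_fderiv ?_
    ext v
    simp [add_mul, Finset.sum_add_distrib]
  | mul_X p i hp =>
    have hmul := hp.fun_mul (ContinuousLinearMap.proj i : (ι → 𝕜) →L[𝕜] 𝕜).hasStrictFDerivAt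
    simp only [map_mul, eval_X]
    refine hmul.congr_fderiv ?_
    ext v
    simp [pderiv_X, Pi.single_apply, apply_ite, add_mul, Finset.sum_add_distrib,
      Finset.mul_sum, mul_assoc]

section CoordinateGraphs

variable {𝕜 : Type*} {m : ℕ} {j : Fin (m + 1)}

theorem pi_norm_le_max_norm_removeNth {E : Type*} [SeminormedAddGroup E] (j : Fin (m + 1))
    (v : Fin (m + 1) → E) : ‖v‖ ≤ max ‖v j‖ ‖j.removeNth v‖ :=
  (pi_norm_le_iff_of_nonneg (by positivity)).2 <| (Fin.forall_iff_succAbove j).2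
    ⟨le_max_left _ _, fun k => le_max_of_le_right (norm_le_pi_norm (j.removeNth v) k)⟩

theorem norm_le_mul_norm_removeNth [NormedField 𝕜] {L : (Fin (m + 1) → 𝕜) →ₗ[𝕜] 𝕜}
    (hj : L (Pi.single j 1) ≠ 0) (hmax : ∀ i, ‖L (Pi.single i 1)‖ ≤ ‖L (Pi.single j 1)‖)
    {v : Fin (m + 1) → 𝕜} (hv : ‖L v‖ ≤ ‖L (Pi.single j 1)‖ / 2 * ‖v‖) :
    ‖v‖ ≤ (2 * m + 1) * ‖j.removeNth v‖ := by
  set M := ‖L (Pi.single j 1)‖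
  set w := j.removeNth v
  have hL : L v = v j * L (Pi.single j 1)
      + ∑ k, w k * L (Pi.single (j.succAbove k) 1) := by
    conv_lhs => rw [pi_eq_sum_univ' v, map_sum]
    simp only [map_smul, smul_eq_mul]
    rw [Fin.sum_univ_succAbove _ j]
    simp [w, Fin.removeNth]
  have hsum : ‖∑ k, w k * L (Pi.single (j.succAbove k) 1)‖ ≤ m * (‖w‖ * M) := by
    refine (norm_sum_le_of_le _ (f := fun k => w k * L (Pi.single (j.succAbove k) 1))
      (n := fun _ => ‖w‖ * M) fun k _ => ?_).trans (by simp)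
    rw [norm_mul]
    gcongr
    · exact norm_le_pi_norm w k
    · exact hmax _
  have hvj : ‖v j‖ ≤ ‖v‖ / 2 + m * ‖w‖ := by
    have hmul : ‖v j‖ * M ≤ (‖v‖ / 2 + m * ‖w‖) * M := calc
      ‖v j‖ * M = ‖L v - ∑ k, w k * L (Pi.single (j.succAbove k) 1)‖ := by
        rw [hL, add_sub_cancel_right, norm_mul]
      _ ≤ M / 2 * ‖v‖ + m * (‖w‖ * M) := (norm_sub_le _ _).trans (add_le_add hv hsum)
      _ = (‖v‖ / 2 + m * ‖w‖) * M := by ring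
    exact le_of_mul_le_mul_right hmul (norm_pos_iff.2 hj)
  have hw : 0 ≤ ‖w‖ := norm_nonneg w
  have hmw : 0 ≤ m * ‖w‖ := by positivity
  rcases le_max_iff.1 (pi_norm_le_max_norm_removeNth j v) with h | h <;> linarith

theorem exists_mem_nhds_antilipschitzWith_removeNth [NontriviallyNormedField 𝕜]
    {F : (Fin (m + 1) → 𝕜) → 𝕜} {F' : (Fin (m + 1) → 𝕜) →L[𝕜] 𝕜} {x : Fin (m + 1) → 𝕜}
    (hF : HasStrictFDerivAt F F' x) (hj : F' (Pi.single j 1) ≠ 0)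
    (hmax : ∀ i, ‖F' (Pi.single i 1)‖ ≤ ‖F' (Pi.single j 1)‖) (c : 𝕜) :
    ∃ U ∈ 𝓝 x, AntilipschitzWith (2 * m + 1)
      ((F ⁻¹' {c} ∩ U).domRestrict (j.removeNth : (Fin (m + 1) → 𝕜) → Fin m → 𝕜)) := by
  have hd := hF.isLittleO.def (half_pos (norm_pos_iff.2 hj))
  rw [nhds_prod_eq] at hd
  obtain ⟨U, hU, hUd⟩ := Filter.mem_prod_same_iff.1 hd
  refine ⟨U, hU, AntilipschitzWith.of_le_mul_dist ?_⟩
  rintro ⟨y, hyc, hyU⟩ ⟨z, hzc, hzU⟩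
  have hyz : ‖F y - F z - F' (y - z)‖ ≤ ‖F' (Pi.single j 1)‖ / 2 * ‖y - z‖ :=
    hUd (Set.mk_mem_prod hyU hzU)
  rw [Set.mem_preimage, Set.mem_singleton_iff] at hyc hzc
  rw [hyc, hzc, sub_self, zero_sub, norm_neg] at hyz
  have hle := norm_le_mul_norm_removeNth (L := F'.toLinearMap) hj hmax hyz
  have hsub : j.removeNth (y - z) = j.removeNth y - j.removeNth z := rfl
  simpa [Subtype.dist_eq, dist_eq_norm, hsub] using hle

end CoordinateGraphs

section BanachIndicatrix

variable {X Y : Type*} {f : X → Y} {s : Set X}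

/-- The Banach indicatrix of `f` on `s`: the number of points of `s` which `f` sends to `y`. -/
noncomputable def banachIndicatrix (f : X → Y) (s : Set X) (y : Y) : ℝ≥0∞ :=
  ((s ∩ f ⁻¹' {y}).encard : ℝ≥0∞)

theorem banachIndicatrix_mono {t : Set X} (hst : s ⊆ t) (y : Y) :
    banachIndicatrix f s y ≤ banachIndicatrix f t y :=
  ENat.toENNReal_le.2 (Set.encard_le_encard (Set.inter_subset_inter_left _ hst))

theorem banachIndicatrix_iUnion {ι : Type*} {A : ι → Set X}
    (hA : Pairwise (Function.onFun Disjoint A)) (y : Y) :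
    banachIndicatrix f (⋃ k, A k) y = ∑' k, banachIndicatrix f (A k) y := by
  simp only [banachIndicatrix, Set.iUnion_inter, ← ENNReal.tsum_set_one]
  exact ENNReal.tsum_biUnion (f := 1) fun k _ l _ hkl =>
    (hA hkl).mono Set.inter_subset_left Set.inter_subset_left

theorem banachIndicatrix_of_injOn (hf : Set.InjOn f s) (y : Y) :
    banachIndicatrix f s y = (f '' s).indicator 1 y := by
  by_cases hy : y ∈ f '' s
  · obtain ⟨x, hx, rfl⟩ := hy
    have hfiber : s ∩ f ⁻¹' {f x} = {x} :=
      Set.eq_singleton_iff_unique_mem.2 ⟨⟨hx, rfl⟩, fun z hz => hf hz.1 hx hz.2⟩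
    simp [banachIndicatrix, hfiber, Set.mem_image_of_mem f hx]
  · have hfiber : s ∩ f ⁻¹' {y} = ∅ :=
      Set.eq_empty_of_forall_notMem fun x hx => hy ⟨x, hx⟩
    simp [banachIndicatrix, hfiber, hy]

theorem lintegral_banachIndicatrix_le [MeasurableSpace Y] {μ : Measure Y} {B : Set Y} {N : ℝ≥0∞}
    (hB : MeasurableSet B) (hsB : Set.MapsTo f s B) (hN : ∀ᵐ y ∂μ, banachIndicatrix f s y ≤ N) :
    ∫⁻ y, banachIndicatrix f s y ∂μ ≤ N * μ B := by
  rw [← lintegral_indicator_const hB]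
  refine lintegral_mono_ae ?_
  filter_upwards [hN] with y hy
  by_cases hyB : y ∈ B
  · rwa [Set.indicator_of_mem hyB]
  · have hfiber : s ∩ f ⁻¹' {y} = ∅ :=
      Set.eq_empty_of_forall_notMem fun x hx => hyB (hx.2 ▸ hsB hx.1)
    simp [banachIndicatrix, hfiber]

end BanachIndicatrix

section SigmaAntilipschitz

variable {X Y : Type*} [PseudoEMetricSpace X] [PseudoEMetricSpace Y] {K : ℝ≥0}
  {f : X → Y} {s t : Set X}

theorem antilipschitzWith_domRestrict_mono (hst : s ⊆ t)
    (ht : AntilipschitzWith K (t.domRestrict f)) : AntilipschitzWith K (s.domRestrict f) :=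
  fun x y => ht ⟨x, hst x.2⟩ ⟨y, hst y.2⟩

variable [MeasurableSpace X]

/-- A map is `σ`-antilipschitz on `s` with constant `K` if `s` is the union of countably many
measurable pieces on each of which the map is antilipschitz with constant `K`. For a projection to
a coordinate hyperplane, such an `s` is a countable union of pieces of Lipschitz graphs. -/
def SigmaAntilipschitzOn (K : ℝ≥0) (f : X → Y) (s : Set X) : Prop :=
  ∃ T : Set (Set X), T.Countable ∧
    (∀ A ∈ T, MeasurableSet A ∧ AntilipschitzWith K (A.domRestrict f)) ∧ ⋃₀ T = s

namespace SigmaAntilipschitzOn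

protected theorem empty : SigmaAntilipschitzOn K f ∅ :=
  ⟨∅, Set.countable_empty, by simp, Set.sUnion_empty⟩

theorem union (hs : SigmaAntilipschitzOn K f s) (ht : SigmaAntilipschitzOn K f t) :
    SigmaAntilipschitzOn K f (s ∪ t) := by
  obtain ⟨S, hSc, hS, rfl⟩ := hs
  obtain ⟨T, hTc, hT, rfl⟩ := ht
  exact ⟨S ∪ T, hSc.union hTc, fun A hA => hA.elim (hS A) (hT A), Set.sUnion_union S T⟩

theorem inter (hs : SigmaAntilipschitzOn K f s) (ht : MeasurableSet t) :
    SigmaAntilipschitzOn K f (s ∩ t) := by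
  obtain ⟨S, hSc, hS, rfl⟩ := hs
  refine ⟨(· ∩ t) '' S, hSc.image _, ?_, by
    rw [Set.sUnion_image, Set.sUnion_eq_biUnion, Set.iUnion₂_inter]⟩
  rintro _ ⟨A, hA, rfl⟩
  exact ⟨(hS A hA).1.inter ht,
    antilipschitzWith_domRestrict_mono Set.inter_subset_left (hS A hA).2⟩

theorem of_forall_exists_nhds [SecondCountableTopology X] [OpensMeasurableSpace X]
    (hs : MeasurableSet s)
    (h : ∀ x ∈ s, ∃ U ∈ 𝓝 x, AntilipschitzWith K ((s ∩ U).domRestrict f)) :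
    SigmaAntilipschitzOn K f s := by
  have hopen : ∀ x ∈ s, ∃ U, IsOpen U ∧ x ∈ U ∧ AntilipschitzWith K ((s ∩ U).domRestrict f) := by
    intro x hx
    obtain ⟨V, hV, hVf⟩ := h x hx
    obtain ⟨U, hUV, hU, hxU⟩ := mem_nhds_iff.1 hV
    exact ⟨U, hU, hxU,
      antilipschitzWith_domRestrict_mono (Set.inter_subset_inter_right s hUV) hVf⟩
  choose! U hU hxU hUf using hopen
  obtain ⟨t, hts, htc, hcover⟩ := TopologicalSpace.countable_cover_nhdsWithin
    fun x hx => mem_nhdsWithin_of_mem_nhds ((hU x hx).mem_nhds (hxU x hx))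
  refine ⟨(fun x => s ∩ U x) '' t, htc.image _, ?_, ?_⟩
  · rintro _ ⟨x, hx, rfl⟩
    exact ⟨hs.inter (hU x (hts hx)).measurableSet, hUf x (hts hx)⟩
  · rw [Set.sUnion_image, ← Set.inter_iUnion₂]
    exact Set.inter_eq_left.2 hcover

theorem exists_pairwise_disjoint_iUnion (hs : SigmaAntilipschitzOn K f s) :
    ∃ A : ℕ → Set X, (∀ k, MeasurableSet (A k)) ∧ Pairwise (Function.onFun Disjoint A) ∧
      (∀ k, AntilipschitzWith K ((A k).domRestrict f)) ∧ ⋃ k, A k = s := by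
  obtain ⟨T, hTc, hT, rfl⟩ := hs
  obtain ⟨B, hB⟩ := (hTc.insert ∅).exists_eq_range (Set.insert_nonempty _ _)
  have hBT : ∀ k, MeasurableSet (B k) ∧ AntilipschitzWith K ((B k).domRestrict f) := by
    intro k
    rcases hB.symm ▸ Set.mem_range_self k with hk | hk
    · rw [hk]
      exact ⟨MeasurableSet.empty, AntilipschitzWith.of_subsingleton⟩
    · exact hT _ hk
  refine ⟨disjointed B, MeasurableSet.disjointed fun k => (hBT k).1, disjoint_disjointed B,
    fun k => antilipschitzWith_domRestrict_mono (disjointed_subset B k) (hBT k).2, ?_⟩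
  rw [iUnion_disjointed, ← Set.sUnion_range, ← hB, Set.sUnion_insert, Set.empty_union]

end SigmaAntilipschitzOn

end SigmaAntilipschitz

section AreaInequality

variable {X Y : Type*} [EMetricSpace X] [MeasurableSpace X] [BorelSpace X]
  [EMetricSpace Y] [MeasurableSpace Y] [BorelSpace Y] {K : ℝ≥0} {f : X → Y} {s : Set X}

theorem hausdorffMeasure_le_of_antilipschitzWith_domRestrict {d : ℝ} (hd : 0 ≤ d)
    (hf : AntilipschitzWith K (s.domRestrict f)) :
    μH[d] s ≤ (K : ℝ≥0∞) ^ d * μH[d] (f '' s) := by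
  have hle := hf.le_hausdorffMeasure_image hd Set.univ
  rwa [Set.image_univ, Set.range_domRestrict,
    ← isometry_subtype_coe.hausdorffMeasure_image (Or.inl hd), Set.image_univ,
    Subtype.range_coe] at hle

theorem SigmaAntilipschitzOn.hausdorffMeasure_le [StandardBorelSpace X]
    [SecondCountableTopology Y] {d : ℝ} (hd : 0 ≤ d) (hfm : Measurable f)
    (hf : SigmaAntilipschitzOn K f s) :
    μH[d] s ≤ (K : ℝ≥0∞) ^ d * ∫⁻ y, banachIndicatrix f s y ∂μH[d] := by
  obtain ⟨A, hAm, hAd, hAK, rfl⟩ := hf.exists_pairwise_disjoint_iUnion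
  have hinj : ∀ k, Set.InjOn f (A k) := fun k => Set.injOn_iff_injective.2 (hAK k).injective
  have himage : ∀ k, MeasurableSet (f '' A k) := fun k =>
    (hAm k).image_of_measurable_injOn hfm (hinj k)
  calc μH[d] (⋃ k, A k) ≤ ∑' k, μH[d] (A k) := measure_iUnion_le A
    _ ≤ ∑' k, (K : ℝ≥0∞) ^ d * μH[d] (f '' A k) :=
        ENNReal.tsum_le_tsum fun k =>
          hausdorffMeasure_le_of_antilipschitzWith_domRestrict hd (hAK k)
    _ = (K : ℝ≥0∞) ^ d * ∑' k, ∫⁻ y, (f '' A k).indicator 1 y ∂μH[d] := by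
        simp_rw [ENNReal.tsum_mul_left, lintegral_indicator_one (himage _)]
    _ = (K : ℝ≥0∞) ^ d * ∫⁻ y, ∑' k, (f '' A k).indicator 1 y ∂μH[d] := by
        rw [lintegral_tsum fun k => (measurable_one.indicator (himage k)).aemeasurable]
    _ = (K : ℝ≥0∞) ^ d * ∫⁻ y, banachIndicatrix f (⋃ k, A k) y ∂μH[d] := by
        simp_rw [banachIndicatrix_iUnion hAd, banachIndicatrix_of_injOn (hinj _)]

end AreaInequality

theorem hausdorffMeasure_euclideanSpace_le {ι : Type*} [Fintype ι] {d : ℝ} (hd : 0 ≤ d)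
    (s : Set (EuclideanSpace ℝ ι)) :
    μH[d] s ≤ (Fintype.card ι : ℝ≥0∞) ^ (d / 2) * μH[d] (WithLp.ofLp '' s) := by
  have hle := (PiLp.antilipschitzWith_ofLp 2 fun _ : ι => ℝ).le_hausdorffMeasure_image hd s
  rwa [ENNReal.coe_rpow_of_nonneg _ (by positivity), ← ENNReal.rpow_mul, ENNReal.coe_natCast,
    ENNReal.toReal_div, ENNReal.toReal_one, ENNReal.toReal_ofNat, one_div_mul_eq_div] at hle

theorem hausdorffMeasure_fin_pi_real (m : ℕ) : (μH[m] : Measure (Fin m → ℝ)) = volume := by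
  simpa using hausdorffMeasure_pi_real (ι := Fin m)

theorem hausdorffMeasure_fin_pi_real_of_lt {m : ℕ} {d : ℝ≥0} (hd : m < d) :
    (μH[d] : Measure (Fin m → ℝ)) = 0 := by
  refine Measure.measure_univ_eq_zero.1 (hausdorffMeasure_of_dimH_lt ?_)
  rw [Real.dimH_univ_pi_fin]
  exact_mod_cast hd

theorem encard_setOf_eval_comp_eq_zero_le {σ R : Type*} [CommRing R] [IsDomain R]
    (P : MvPolynomial σ R) {q : σ → Polynomial R} {k : ℕ} (hq : ∀ i, (q i).natDegree ≤ k)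
    (hP : ∃ t, eval (fun i => (q i).eval t) P ≠ 0) :
    {t | eval (fun i => (q i).eval t) P = 0}.encard ≤ (P.totalDegree * k : ℕ) := by
  classical
  set p : Polynomial R := aeval q P
  have heval : ∀ t, p.eval t = eval (fun i => (q i).eval t) P := by
    intro t
    have hid : (Polynomial.evalRingHom t).comp Polynomial.C = RingHom.id R := by ext; simp
    rw [show p = aeval q P from rfl, aeval_def,
      polynomial_eval_eval₂, Polynomial.algebraMap_eq, hid, eval₂_id]
  have hp : p ≠ 0 := by
    rintro hp
    obtain ⟨t, ht⟩ := hP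
    rw [← heval, hp, Polynomial.eval_zero] at ht
    exact ht rfl
  have hroots : {t | eval (fun i => (q i).eval t) P = 0} = p.roots.toFinset := by
    ext t
    simp [hp, ← heval]
  rw [hroots, Set.encard_coe_eq_coe_finsetCard, Nat.cast_le]
  calc p.roots.toFinset.card ≤ p.roots.card := Multiset.toFinset_card_le _
    _ ≤ p.natDegree := Polynomial.card_roots' p
    _ ≤ P.totalDegree * k := aeval_natDegree_le P le_rfl q hq

section ZeroSet

variable {m : ℕ} (P : MvPolynomial (Fin (m + 1)) ℝ)

/-- The zeros of `P` at which the `j`-th partial derivative is nonzero and largest in absolute value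
among all partial derivatives. Near such a point the zero set is a Lipschitz graph over the
hyperplane `x j = 0`, with a Lipschitz constant depending only on the dimension. -/
def steepZeros (j : Fin (m + 1)) : Set (Fin (m + 1) → ℝ) :=
  {x | eval x P = 0 ∧ eval x (pderiv j P) ≠ 0 ∧ ∀ i, ‖eval x (pderiv i P)‖ ≤ ‖eval x (pderiv j P)‖}

theorem measurableSet_steepZeros (j : Fin (m + 1)) : MeasurableSet (steepZeros P j) := by
  have hmeas : ∀ Q : MvPolynomial (Fin (m + 1)) ℝ, Measurable fun x => eval x Q :=
    fun Q => (continuous_eval Q).measurable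
  simp only [steepZeros, Set.ofPred_and, Set.ofPred_forall]
  exact ((hmeas P) (measurableSet_singleton 0)).inter <|
    ((hmeas _) (measurableSet_singleton 0).compl).inter <|
    .iInter fun i => measurableSet_le (hmeas _).norm (hmeas _).norm

theorem sigmaAntilipschitzOn_steepZeros (j : Fin (m + 1)) :
    SigmaAntilipschitzOn (2 * m + 1) (j.removeNth : (Fin (m + 1) → ℝ) → Fin m → ℝ)
      (steepZeros P j) := by
  refine .of_forall_exists_nhds (measurableSet_steepZeros P j) fun x hx => ?_
  obtain ⟨U, hU, hUj⟩ := exists_mem_nhds_antilipschitzWith_removeNth (j := j)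
    (hasStrictFDerivAt_eval P x) (by simpa [Pi.single_apply] using hx.2.1)
    (by simpa [Pi.single_apply] using hx.2.2) 0
  exact ⟨U, hU, antilipschitzWith_domRestrict_mono
    (Set.inter_subset_inter_left U fun y hy => hy.1) hUj⟩

variable {P}

theorem exists_mem_steepZeros {x : Fin (m + 1) → ℝ} (hx : eval x P = 0) {i : Fin (m + 1)}
    (hi : eval x (pderiv i P) ≠ 0) : ∃ j, x ∈ steepZeros P j := by
  obtain ⟨j, hj⟩ := Finite.exists_max fun j => ‖eval x (pderiv j P)‖
  exact ⟨j, hx, norm_pos_iff.1 ((norm_pos_iff.2 hi).trans_le (hj i)), hj⟩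

theorem exists_sigmaAntilipschitzOn_cover_zeros (hP : P ≠ 0) :
    ∃ Z : Fin (m + 1) → Set (Fin (m + 1) → ℝ),
      (∀ j, SigmaAntilipschitzOn (2 * m + 1)
        (j.removeNth : (Fin (m + 1) → ℝ) → Fin m → ℝ) (Z j)) ∧
      {x | eval x P = 0} ⊆ ⋃ j, Z j := by
  induction hk : P.totalDegree using Nat.strong_induction_on generalizing P with
  | _ k ih =>
  subst hk
  by_cases hdeg : P.totalDegree = 0
  · refine ⟨fun _ => ∅, fun _ => .empty, fun x hx => (hP ?_).elim⟩
    rw [totalDegree_eq_zero_iff_eq_C] at hdeg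
    rw [Set.mem_ofPred_eq, hdeg, eval_C] at hx
    rw [hdeg, hx, C_0]
  · obtain ⟨i, hi⟩ := exists_pderiv_ne_zero hdeg
    obtain ⟨Z, hZ, hcover⟩ := ih _ (totalDegree_pderiv_lt hdeg i) hi rfl
    refine ⟨fun j => Z j ∪ steepZeros P j,
      fun j => (hZ j).union (sigmaAntilipschitzOn_steepZeros P j), fun x hx => ?_⟩
    rw [Set.iUnion_union_distrib]
    by_cases hxi : eval x (pderiv i P) = 0
    · exact Or.inl (hcover hxi)
    · exact Or.inr (Set.mem_iUnion.2 (exists_mem_steepZeros hx hxi))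

theorem measurable_removeNth {α : Type*} [MeasurableSpace α] (j : Fin (m + 1)) :
    Measurable (j.removeNth : (Fin (m + 1) → α) → Fin m → α) :=
  measurable_pi_lambda _ fun _ => measurable_pi_apply _

theorem volume_zeros_eq_zero (hP : P ≠ 0) :
    volume {x : Fin (m + 1) → ℝ | eval x P = 0} = 0 := by
  obtain ⟨Z, hZ, hcover⟩ := exists_sigmaAntilipschitzOn_cover_zeros hP
  refine measure_mono_null hcover (measure_iUnion_null fun j => ?_)
  have hle := (hZ j).hausdorffMeasure_le (d := ((m + 1 : ℕ) : ℝ≥0)) (by positivity)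
    (measurable_removeNth j)
  rw [hausdorffMeasure_fin_pi_real_of_lt (m := m) (by norm_cast; simp), lintegral_zero_measure,
    mul_zero, NNReal.coe_natCast, hausdorffMeasure_fin_pi_real] at hle
  exact le_zero_iff.1 hle

theorem ae_exists_eval_insertNth_ne_zero (hP : P ≠ 0) (j : Fin (m + 1)) :
    ∀ᵐ y : Fin m → ℝ, ∃ t : ℝ, eval (j.insertNth t y : Fin (m + 1) → ℝ) P ≠ 0 := by
  have hae : ∀ᵐ x : Fin (m + 1) → ℝ, eval x P ≠ 0 := by
    rw [ae_iff]
    simpa using volume_zeros_eq_zero hP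
  have hprod : ∀ᵐ p : ℝ × (Fin m → ℝ), eval (j.insertNth p.1 p.2 : Fin (m + 1) → ℝ) P ≠ 0 :=
    (volume_preserving_piFinSuccAbove (fun _ => ℝ) j).symm.quasiMeasurePreserving.ae hae
  have hswap := Measure.measurePreserving_swap.quasiMeasurePreserving.ae hprod
  filter_upwards [Measure.ae_ae_of_ae_prod hswap] with y hy
  exact hy.exists

theorem banachIndicatrix_removeNth_zeros_le {R : Type*} [CommRing R] [IsDomain R]
    (P : MvPolynomial (Fin (m + 1)) R) (j : Fin (m + 1)) {y : Fin m → R}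
    (hy : ∃ t, eval (j.insertNth t y : Fin (m + 1) → R) P ≠ 0) :
    banachIndicatrix (j.removeNth : (Fin (m + 1) → R) → Fin m → R)
      {x | eval x P = 0} y ≤ P.totalDegree := by
  set q : Fin (m + 1) → Polynomial R := j.insertNth Polynomial.X fun k => Polynomial.C (y k)
  have hq : ∀ i, (q i).natDegree ≤ 1 :=
    (Fin.forall_iff_succAbove j).2 ⟨by simp [q], fun k => by simp [q]⟩
  have hqt : ∀ t, (fun i => (q i).eval t) = j.insertNth t y := fun t =>
    Fin.eq_insertNth_iff.2 ⟨by simp [q], by ext k; simp [q, Fin.removeNth]⟩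
  have hfiber : {x | eval x P = 0} ∩ j.removeNth ⁻¹' {y}
      ⊆ (fun t i => (q i).eval t) '' {t | eval (fun i => (q i).eval t) P = 0} := by
    rintro x ⟨hx, rfl⟩
    have hxq : (fun i => (q i).eval (x j)) = x := by rw [hqt, Fin.insertNth_self_removeNth]
    exact ⟨x j, by rwa [Set.mem_ofPred_eq, hxq], hxq⟩
  have hcard := encard_setOf_eval_comp_eq_zero_le P hq (by simpa only [hqt] using hy)
  rw [mul_one] at hcard
  refine (ENat.toENNReal_le.2 ?_).trans_eq (ENat.toENNReal_coe _)
  exact (Set.encard_le_encard hfiber).trans ((Set.encard_image_le _ _).trans hcard)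

theorem hausdorffMeasure_zeros_unitCube_le (hP : P ≠ 0) :
    μH[m] {x : Fin (m + 1) → ℝ | ‖x‖ ≤ 1 ∧ eval x P = 0}
      ≤ (m + 1) * (4 * m + 2) ^ m * P.totalDegree := by
  obtain ⟨Z, hZ, hcover⟩ := exists_sigmaAntilipschitzOn_cover_zeros hP
  set V := {x : Fin (m + 1) → ℝ | ‖x‖ ≤ 1 ∧ eval x P = 0}
  have hV : MeasurableSet V := ((isClosed_le continuous_norm continuous_const).inter
    (isClosed_eq (continuous_eval P) continuous_const)).measurableSet
  have hpiece : ∀ j, μH[m] (Z j ∩ V) ≤ (2 * m + 1) ^ m * (P.totalDegree * 2 ^ m) := by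
    intro j
    have hball : Set.MapsTo j.removeNth (Z j ∩ V) (Metric.closedBall (0 : Fin m → ℝ) 1) :=
      fun x hx => mem_closedBall_zero_iff.2 <| (pi_norm_le_iff_of_nonneg zero_le_one).2
        fun k => (norm_le_pi_norm x _).trans hx.2.1
    have hcount : ∀ᵐ y, banachIndicatrix j.removeNth (Z j ∩ V) y ≤ P.totalDegree := by
      filter_upwards [ae_exists_eval_insertNth_ne_zero hP j] with y hy
      exact (banachIndicatrix_mono (fun x hx => hx.2.2) y).trans
        (banachIndicatrix_removeNth_zeros_le P j hy)
    have hint := lintegral_banachIndicatrix_le Metric.isClosed_closedBall.measurableSet hball hcount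
    rw [Real.volume_pi_closedBall _ zero_le_one] at hint
    have hle := ((hZ j).inter hV).hausdorffMeasure_le (Nat.cast_nonneg m) (measurable_removeNth j)
    rw [hausdorffMeasure_fin_pi_real, ENNReal.rpow_natCast] at hle
    exact hle.trans (by push_cast; gcongr; simpa using hint)
  calc μH[m] V ≤ μH[m] (⋃ j, Z j ∩ V) := by
        rw [← Set.iUnion_inter]
        exact measure_mono fun x hx => ⟨hcover hx.2, hx⟩
    _ ≤ ∑ j, μH[m] (Z j ∩ V) := measure_iUnion_fintype_le _ _
    _ ≤ ∑ _j : Fin (m + 1), (2 * m + 1 : ℝ≥0∞) ^ m * (P.totalDegree * 2 ^ m) :=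
        Finset.sum_le_sum fun j _ => hpiece j
    _ = (m + 1) * (4 * m + 2) ^ m * P.totalDegree := by
        rw [show (4 * m + 2 : ℝ≥0∞) = (2 * m + 1) * 2 by ring, mul_pow]
        rw [Finset.sum_const, Finset.card_univ, Fintype.card_fin, nsmul_eq_mul, Nat.cast_succ]
        ring

theorem hausdorffMeasure_zeros_euclidean_unitBall_le (hP : P ≠ 0) :
    μH[m] {x : EuclideanSpace ℝ (Fin (m + 1)) | ‖x‖ ≤ 1 ∧ eval (fun j => x j) P = 0}
      ≤ (m + 1) ^ (m / 2 : ℝ) * ((m + 1) * (4 * m + 2) ^ m) * P.totalDegree := by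
  set V := {x : EuclideanSpace ℝ (Fin (m + 1)) |
    ‖x‖ ≤ 1 ∧ eval (fun j => x j) P = 0}
  have hsub : WithLp.ofLp '' V ⊆ {x | ‖x‖ ≤ 1 ∧ eval x P = 0} := by
    rintro _ ⟨x, ⟨hx, hxP⟩, rfl⟩
    exact ⟨(pi_norm_le_iff_of_nonneg zero_le_one).2 fun j => (PiLp.norm_apply_le x j).trans hx, hxP⟩
  refine (hausdorffMeasure_euclideanSpace_le (Nat.cast_nonneg m) V).trans ?_
  rw [Fintype.card_fin, Nat.cast_succ, mul_assoc]
  gcongr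
  exact (measure_mono hsub).trans (hausdorffMeasure_zeros_unitCube_le hP)

end ZeroSet

/-- For every `n ≥ 2` there is `C(n)` such that every nonzero real
polynomial `P` in `n` variables of total degree at most `d` has zero set of
`(n-1)`-dimensional Hausdorff measure at most `C(n) d` inside the closed unit ball. -/
theorem stmt14 (n : ℕ) (hn : 2 ≤ n) :
    ∃ C : ℝ, ∀ d : ℕ, 1 ≤ d → ∀ P : MvPolynomial (Fin n) ℝ, P ≠ 0 →
      P.totalDegree ≤ d →
      μH[(n : ℝ) - 1]
          {x : EuclideanSpace ℝ (Fin n) | ‖x‖ ≤ 1 ∧ MvPolynomial.eval (fun j => x j) P = 0}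
        ≤ ENNReal.ofReal (C * d) := by
  obtain ⟨m, rfl⟩ : ∃ m, n = m + 1 := ⟨n - 1, by omega⟩
  rw [Nat.cast_succ, add_sub_cancel_right]
  set C : ℝ≥0∞ := (m + 1) ^ (m / 2 : ℝ) * ((m + 1) * (4 * m + 2) ^ m)
  have hC : C ≠ ⊤ := by finiteness
  refine ⟨C.toReal, fun d _ P hP hPd => ?_⟩
  calc _ ≤ C * P.totalDegree := hausdorffMeasure_zeros_euclidean_unitBall_le hP
    _ ≤ C * d := by gcongr
    _ = ENNReal.ofReal (C.toReal * d) := by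
        rw [ENNReal.ofReal_mul ENNReal.toReal_nonneg, ENNReal.ofReal_toReal hC,
          ENNReal.ofReal_natCast]
end
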